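/- Let d ≥ 2 and let b be a collision kernel satisfying the Lévy condition. Then for every smooth F : S^{d-1} → ℝ with F(−σ) = F(σ), the Hardy-type inequality holds: ∬_{S^{d-1}×S^{d-1}} (F(σ') − F(σ))² b(σ'·σ) dσ' dσ ≤ C_P ∫_{S^{d-1}} |∇_σ F|² dσ, where C_P = (1/(d−1)) ∫_{S^{d-1}} (1 − (e·σ')²) b(e·σ') dσ' (the integral being independent of the unit vector e). -/

import Mathlib

open MeasureTheory
open scoped RealInnerProductSpace

noncomputable section

/-- Euclidean space `ℝ^d`. -/
abbrev E (d : ℕ) : Type := EuclideanSpace ℝ (Fin d)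

/-- The unit sphere `S^{d-1}` of `ℝ^d`. -/
abbrev Sph (d : ℕ) : Type := Metric.sphere (0 : E d) 1

/-- The surface measure on the unit sphere, realized as a Hausdorff measure. -/
def sphMeasure (d : ℕ) : Measure (Sph d) := μH[(d : ℝ) - 1]

open Classical in
/-- The 0-homogeneous extension of a function defined on the unit sphere. -/
def homogExt {d : ℕ} (F : Sph d → ℝ) (x : E d) : ℝ :=
  if hx : x = 0 then 0
  else F ⟨‖x‖⁻¹ • x, by
    rw [mem_sphere_zero_iff_norm, norm_smul, norm_inv, norm_norm,
      inv_mul_cancel₀ (norm_ne_zero_iff.mpr hx)]⟩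

/-- Smoothness of a function on the sphere, via its 0-homogeneous extension. -/
def SphSmooth {d : ℕ} (F : Sph d → ℝ) : Prop :=
  ContDiffOn ℝ (⊤ : ℕ∞) (homogExt F) {x : E d | x ≠ 0}

/-- Spherical gradient: the Euclidean gradient of the 0-homogeneous extension. -/
def sphGrad {d : ℕ} (F : Sph d → ℝ) (σ : Sph d) : E d :=
  gradient (homogExt F) (σ : E d)

/-- Euclidean Laplacian of a function on `ℝ^d`. -/
def lapl {d : ℕ} (f : E d → ℝ) (x : E d) : ℝ :=
  ∑ i : Fin d,
    fderiv ℝ (fun y => fderiv ℝ f y (EuclideanSpace.single i 1)) x (EuclideanSpace.single i 1)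

/-- Spherical Laplacian: the Euclidean Laplacian of the 0-homogeneous extension. -/
def sphLap {d : ℕ} (F : Sph d → ℝ) (σ : Sph d) : ℝ :=
  lapl (homogExt F) (σ : E d)

/-- The spherical linear Boltzmann operator `𝓑` with kernel `b`. -/
def sphB {d : ℕ} (b : ℝ → ℝ) (F : Sph d → ℝ) (σ : Sph d) : ℝ :=
  ∫ (σ' : Sph d), (F σ' - F σ) * b ⟪(σ' : E d), (σ : E d)⟫ ∂(sphMeasure d)

/-- The intertwined iterated carré du champ `Γ²_{𝓑,Δ}(g,g)`. -/
def Gamma2BD {d : ℕ} (b : ℝ → ℝ) (g : Sph d → ℝ) (σ : Sph d) : ℝ :=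
  (1 / 2) * sphB b (fun τ => ‖sphGrad g τ‖ ^ 2) σ
    - ⟪sphGrad g σ, sphGrad (fun τ => sphB b g τ) σ⟫

/-- The iterated carré du champ `Γ²_{Δ,Δ}(g,g)` of the spherical Laplacian. -/
def Gamma2DD {d : ℕ} (g : Sph d → ℝ) (σ : Sph d) : ℝ :=
  (1 / 2) * sphLap (fun τ => ‖sphGrad g τ‖ ^ 2) σ
    - ⟪sphGrad g σ, sphGrad (fun τ => sphLap g τ) σ⟫

/-- A collision kernel: non-negative, measurable, satisfying the Lévy condition. -/
def LevyKernel (d : ℕ) (b : ℝ → ℝ) : Prop :=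
  Measurable b ∧ (∀ c ∈ Set.Icc (-1 : ℝ) 1, 0 ≤ b c) ∧
    ∀ e : Sph d,
      Integrable
        (fun σ' : Sph d => (1 - ⟪(e : E d), (σ' : E d)⟫ ^ 2) * b ⟪(e : E d), (σ' : E d)⟫)
        (sphMeasure d)

/-- The log-Sobolev inequality `LS(Λ, b)` on the sphere. -/
def LS (d : ℕ) (b : ℝ → ℝ) (Λ : ℝ) : Prop :=
  ∀ f : Sph d → ℝ, SphSmooth f → (∀ σ, 0 < f σ) → (∀ σ, f (-σ) = f σ) →
    Λ * ∫ (σ : Sph d), (∫ (σ' : Sph d),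
          (f σ' - f σ) ^ 2 / (f σ' + f σ) * b ⟪(σ' : E d), (σ : E d)⟫ ∂(sphMeasure d))
        ∂(sphMeasure d)
      ≤ ∫ (σ : Sph d), Gamma2BD b (fun τ => Real.log (f τ)) σ * f σ ∂(sphMeasure d)

theorem abs_sin_int_mul_le (n : ℤ) (x : ℝ) : |Real.sin (n * x)| ≤ |(n : ℝ)| * |Real.sin x| := by
  have key : ∀ m : ℕ, |Real.sin (m * x)| ≤ m * |Real.sin x| := by
    intro m
    induction m with
    | zero => simp
    | succ k ih =>
      push_cast
      rw [add_mul, one_mul, Real.sin_add]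
      calc _ ≤ |Real.sin (k * x) * Real.cos x| + |Real.cos (k * x) * Real.sin x| := abs_add_le _ _
        _ ≤ |Real.sin (k * x)| * 1 + 1 * |Real.sin x| := by
          rw [abs_mul, abs_mul]
          gcongr
          · exact Real.abs_cos_le_one _
          · exact Real.abs_cos_le_one _
        _ ≤ _ := by linarith
  obtain ⟨m, rfl | rfl⟩ := n.eq_nat_or_neg
  · simpa using key m
  · simpa using key m

open intervalIntegral in
theorem fourierCoeffOn_comp_sub {T : ℝ} (hT : 0 < T) {f : ℝ → ℂ}
    (hf : Function.Periodic f T) (θ : ℝ) (n : ℤ) :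
    fourierCoeffOn hT (fun x => f (x - θ)) n
      = Complex.exp (-2 * Real.pi * Complex.I * n * θ / T) * fourierCoeffOn hT f n := by
  rw [fourierCoeffOn_eq_integral, fourierCoeffOn_eq_integral, mul_smul_comm,
    ← intervalIntegral.integral_const_mul]
  congr 1
  have hper : Function.Periodic
      (fun x : ℝ => Complex.exp (-2 * Real.pi * Complex.I * n * θ / T) *
        (fourier (-n) (x : AddCircle (T - 0)) • f x)) T := by
    intro x
    have : ((x + T : ℝ) : AddCircle (T - 0)) = x := by
      simp
    simp only [this, hf x]
  have h1 := hper.intervalIntegral_add_eq 0 (-θ)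
  rw [zero_add] at h1
  rw [h1, show -θ = 0 - θ by ring, show 0 - θ + T = T - θ by ring, ← integral_comp_sub_right
    (fun x : ℝ => Complex.exp (-2 * Real.pi * Complex.I * n * θ / T) *
        (fourier (-n) (x : AddCircle (T - 0)) • f x)) θ]
  congr 1
  ext x
  rw [fourier_coe_apply, fourier_coe_apply, smul_eq_mul, smul_eq_mul, ← mul_assoc,
    ← Complex.exp_add]
  congr 2
  push_cast
  rw [sub_zero]
  ring

theorem fourierCoeffOn_sub_comp_sub {T : ℝ} (hT : 0 < T) {f : ℝ → ℂ} (hc : Continuous f)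
    (hf : Function.Periodic f T) (θ : ℝ) (n : ℤ) :
    fourierCoeffOn hT (fun x => f x - f (x - θ)) n
      = (1 - Complex.exp (-2 * Real.pi * Complex.I * n * θ / T)) * fourierCoeffOn hT f n := by
  rw [sub_mul, one_mul, ← fourierCoeffOn_comp_sub hT hf, fourierCoeffOn_eq_integral,
    fourierCoeffOn_eq_integral, fourierCoeffOn_eq_integral, ← smul_sub,
    ← intervalIntegral.integral_sub]
  · simp_rw [smul_sub]
  all_goals
    refine Continuous.intervalIntegrable ?_ _ _
    have h := (map_continuous (fourier (T := T - 0) (-n))).comp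
      (AddCircle.continuous_mk' (T - 0))
    refine Continuous.smul h ?_
    fun_prop

/-- The `L²` modulus of continuity of a `π`-periodic function. -/
theorem integral_sub_comp_sub_sq_le {f f' : ℝ → ℝ} (hf : ∀ x, HasDerivAt f (f' x) x)
    (hf' : Continuous f') (hper : Function.Periodic f Real.pi) (θ : ℝ) :
    ∫ x in 0..Real.pi, (f x - f (x - θ)) ^ 2
      ≤ Real.sin θ ^ 2 * ∫ x in 0..Real.pi, f' x ^ 2 := by
  have hfc : Continuous f := continuous_iff_continuousAt.mpr fun x => (hf x).continuousAt
  set F : ℝ → ℂ := fun x => (f x : ℂ) with hF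
  set F' : ℝ → ℂ := fun x => (f' x : ℂ) with hF'
  have hFc : Continuous F := by fun_prop
  have hFc' : Continuous F' := by fun_prop
  have hFper : Function.Periodic F Real.pi := fun x => by simp [hF, hper x]
  have hFd : ∀ x, HasDerivAt F (F' x) x := fun x => (hf x).ofReal_comp
  have hL2 : ∀ g : ℝ → ℂ, Continuous g → MemLp g 2 (volume.restrict (Set.Ioc 0 Real.pi)) := by
    intro g hg
    obtain ⟨C, hC⟩ := (isCompact_Icc (a := 0) (b := Real.pi)).exists_bound_of_continuousOn
      hg.continuousOn
    exact MemLp.of_bound hg.aestronglyMeasurable C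
      ((ae_restrict_mem measurableSet_Ioc).mono fun x hx => hC x (Set.Ioc_subset_Icc_self hx))
  have s1 := hasSum_sq_fourierCoeffOn Real.pi_pos
    (hL2 (fun x => F x - F (x - θ)) (by fun_prop))
  have s2 := (hasSum_sq_fourierCoeffOn Real.pi_pos (hL2 F' hFc')).mul_left (Real.sin θ ^ 2)
  have key := hasSum_le (fun n => ?_) s1 s2
  · simp only [hF, hF', ← Complex.ofReal_sub, Complex.norm_real, Real.norm_eq_abs, sq_abs,
      sub_zero, smul_eq_mul] at key
    have hpi := Real.pi_pos
    rw [mul_left_comm] at key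
    exact le_of_mul_le_mul_left key (by positivity)
  · rw [fourierCoeffOn_sub_comp_sub _ hFc hFper, norm_mul, mul_pow]
    by_cases hn : n = 0
    · subst hn
      simp
      positivity
    have hcoef := fourierCoeffOn_of_hasDerivAt Real.pi_pos hn (fun x _ => hFd x)
      (hFc'.intervalIntegrable _ _)
    have h0 : F Real.pi = F 0 := by simpa using hFper 0
    have hpi : (Real.pi : ℂ) ≠ 0 := by exact_mod_cast Real.pi_ne_zero
    have hn' : (n : ℂ) ≠ 0 := by exact_mod_cast hn
    have hcoef' : fourierCoeffOn Real.pi_pos F' n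
        = (2 * Complex.I * n) * fourierCoeffOn Real.pi_pos F n := by
      rw [hcoef, h0]
      field_simp
      simp
    have hexp : ‖1 - Complex.exp (-2 * Real.pi * Complex.I * n * θ / Real.pi)‖
        = 2 * |Real.sin (n * θ)| := by
      have : -2 * Real.pi * Complex.I * n * θ / Real.pi = Complex.I * ((-2 * n * θ : ℝ) : ℂ) := by
        push_cast; field_simp
      rw [this, norm_sub_rev, Complex.norm_exp_I_mul_ofReal_sub_one]
      rw [show -2 * n * θ / 2 = -(n * θ) by ring]
      simp
    rw [hexp, hcoef', norm_mul, mul_pow _ ‖fourierCoeffOn Real.pi_pos F n‖, ← mul_assoc]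
    gcongr ?_ * _
    have := abs_sin_int_mul_le n θ
    simp only [norm_mul, Complex.norm_ofNat, Complex.norm_I, Complex.norm_intCast, mul_one]
    rw [← sq_abs (Real.sin θ), ← mul_pow]
    exact pow_le_pow_left₀ (by positivity) (by linarith) 2

theorem setLIntegral_sub_comp_sub_sq_le {f f' : ℝ → ℝ} (hf : ∀ x, HasDerivAt f (f' x) x)
    (hf' : Continuous f') (hper : Function.Periodic f Real.pi) (θ : ℝ) :
    ∫⁻ x in Set.Ioc 0 Real.pi, ENNReal.ofReal ((f x - f (x - θ)) ^ 2)
      ≤ ENNReal.ofReal (Real.sin θ ^ 2) *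
        ∫⁻ x in Set.Ioc 0 Real.pi, ENNReal.ofReal (f' x ^ 2) := by
  have hfc : Continuous f := continuous_iff_continuousAt.mpr fun x => (hf x).continuousAt
  have key := integral_sub_comp_sub_sq_le hf hf' hper θ
  rw [intervalIntegral.integral_of_le Real.pi_pos.le,
    intervalIntegral.integral_of_le Real.pi_pos.le] at key
  rw [← ofReal_integral_eq_lintegral_ofReal, ← ofReal_integral_eq_lintegral_ofReal,
    ← ENNReal.ofReal_mul (sq_nonneg _)]
  · exact ENNReal.ofReal_le_ofReal key
  · exact (by fun_prop : Continuous fun x => f' x ^ 2).integrableOn_Ioc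
  · exact Filter.Eventually.of_forall fun x => sq_nonneg _
  · exact (by fun_prop : Continuous fun x => (f x - f (x - θ)) ^ 2).integrableOn_Ioc
  · exact Filter.Eventually.of_forall fun x => sq_nonneg _

/-- The orthogonal group of `ℝ^d`. -/
abbrev OGrp (d : ℕ) : Type := unitary (E d →L[ℝ] E d)

instance (d : ℕ) : ContinuousStar (E d →L[ℝ] E d) :=
  ⟨(ContinuousLinearMap.adjoint (𝕜 := ℝ) (E := E d) (F := E d)).continuous⟩

instance (d : ℕ) : IsTopologicalGroup (OGrp d) :=
  instIsTopologicalGroupSubtypeMemSubmonoidUnitaryOfContinuousMulOfContinuousStar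

instance (d : ℕ) : CompactSpace (OGrp d) := by
  refine (isCompact_iff_compactSpace
    (s := ((unitary (E d →L[ℝ] E d) : Submonoid _) : Set (E d →L[ℝ] E d)))).mp ?_
  refine Metric.isCompact_of_isClosed_isBounded isClosed_unitary ?_
  refine (Metric.isBounded_closedBall (x := (0 : E d →L[ℝ] E d)) (r := 1)).subset ?_
  intro u hu
  rw [mem_closedBall_zero_iff]
  refine ContinuousLinearMap.opNorm_le_bound _ zero_le_one fun x => ?_
  rw [one_mul]
  exact (Unitary.norm_map ⟨u, hu⟩ x).le

instance (d : ℕ) : SecondCountableTopology (OGrp d) :=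
  instPolishSpaceOfSeparableSpaceOfIsCompletelyMetrizableSpace.toSecondCountableTopology

instance (d : ℕ) : BorelSpace (OGrp d) := Subtype.borelSpace _

theorem exists_rightInvariant_measure (d : ℕ) : ∃ ν : Measure (OGrp d),
    IsFiniteMeasure ν ∧ ν Set.univ ≠ 0 ∧
      ∀ (f : OGrp d → ENNReal) (h : OGrp d), ∫⁻ g, f (g * h) ∂ν = ∫⁻ g, f g ∂ν := by
  let m : Measure (OGrp d) := Measure.haar
  refine ⟨m.inv, ?_, ?_, ?_⟩
  · exact ⟨by rw [Measure.inv_apply, Set.inv_univ]; exact measure_lt_top m _⟩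
  · rw [Measure.inv_apply, Set.inv_univ]
    exact (isOpen_univ.measure_pos m Set.univ_nonempty).ne'
  · intro f h
    exact lintegral_mul_right_eq_self f h

/-- The action of an orthogonal map on the unit sphere. -/
def rotSph {d : ℕ} (u : OGrp d) : Sph d ≃ᵢ Sph d :=
  IsometryEquiv.mk'
    (fun σ => ⟨u.1 σ, by rw [mem_sphere_zero_iff_norm, Unitary.norm_map]; simp⟩)
    (fun σ => ⟨(star u).1 σ, by rw [mem_sphere_zero_iff_norm, Unitary.norm_map]; simp⟩)
    (fun σ => Subtype.ext (DFunLike.congr_fun (Unitary.coe_mul_star_self u) (σ : E d)))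
    (Isometry.of_dist_eq fun σ τ => by
      rw [Subtype.dist_eq, Subtype.dist_eq, dist_eq_norm, dist_eq_norm, ← map_sub,
        Unitary.norm_map])

@[simp]
theorem coe_rotSph {d : ℕ} (u : OGrp d) (σ : Sph d) : (rotSph u σ : E d) = u.1 σ := rfl

theorem lintegral_rotSph {d : ℕ} (u : OGrp d) (f : Sph d → ENNReal) :
    ∫⁻ σ, f (rotSph u σ) ∂(sphMeasure d) = ∫⁻ σ, f σ ∂(sphMeasure d) :=
  ((rotSph u).measurePreserving_hausdorffMeasure ((d : ℝ) - 1)).lintegral_comp_emb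
    (rotSph u).toHomeomorph.measurableEmbedding f

theorem dist_inv_norm_smul_le {V : Type*} [NormedAddCommGroup V] [NormedSpace ℝ V] {x y : V}
    (hx : 1 ≤ ‖x‖) (hy : 1 ≤ ‖y‖) : dist (‖x‖⁻¹ • x) (‖y‖⁻¹ • y) ≤ 2 * dist x y := by
  have hx0 : 0 < ‖x‖ := by linarith
  have hy0 : 0 < ‖y‖ := by linarith
  have e1 : ‖x‖⁻¹ • x - ‖y‖⁻¹ • y = ‖x‖⁻¹ • ((x - y) + ((‖y‖ - ‖x‖) * ‖y‖⁻¹) • y) := by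
    rw [sub_mul, mul_inv_cancel₀ hy0.ne', sub_smul, one_smul, sub_add_sub_cancel, smul_sub,
      smul_smul, ← mul_assoc, inv_mul_cancel₀ hx0.ne', one_mul]
  rw [dist_eq_norm, dist_eq_norm, e1, norm_smul, norm_inv, norm_norm]
  have e2 : ‖(x - y) + ((‖y‖ - ‖x‖) * ‖y‖⁻¹) • y‖ ≤ 2 * ‖x - y‖ := by
    refine (norm_add_le _ _).trans ?_
    rw [norm_smul, norm_mul, norm_inv, norm_norm, mul_assoc, inv_mul_cancel₀ hy0.ne', mul_one,
      Real.norm_eq_abs, abs_sub_comm]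
    linarith [abs_norm_sub_norm_le x y]
  calc ‖x‖⁻¹ * _ ≤ 1 * (2 * ‖x - y‖) := by
        gcongr
        exact inv_le_one_of_one_le₀ hx
    _ = _ := one_mul _

theorem isFiniteMeasure_sphMeasure {d : ℕ} (hd : 1 ≤ d) : IsFiniteMeasure (sphMeasure d) := by
  obtain ⟨n, rfl⟩ : ∃ n, d = n + 1 := ⟨d - 1, by omega⟩
  have : CompactSpace (Sph (n + 1)) := isCompact_iff_compactSpace.mp (isCompact_sphere _ _)
  refine ⟨isCompact_univ.measure_lt_top_of_nhdsWithin fun σ _ => ?_⟩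
  rw [nhdsWithin_univ]
  have hσ : ‖(σ : E (n + 1))‖ = 1 := by simp
  let K : Submodule ℝ (E (n + 1)) := (Submodule.span ℝ {(σ : E (n + 1))})ᗮ
  have : Fact (Module.finrank ℝ (E (n + 1)) = n + 1) := ⟨by simp⟩
  have hK : Module.finrank ℝ K = n :=
    Submodule.finrank_orthogonal_span_singleton (by rw [← norm_ne_zero_iff, hσ]; simp)
  have hKorth : ∀ w : K, ⟪(σ : E (n + 1)), (w : E (n + 1))⟫ = 0 := fun w =>
    Submodule.mem_orthogonal_singleton_iff_inner_right.mp w.2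
  have hnorm : ∀ w : K, 1 ≤ ‖(σ : E (n + 1)) + w‖ := by
    intro w
    have h := norm_add_sq_eq_norm_sq_add_norm_sq_of_inner_eq_zero _ _ (hKorth w)
    rw [hσ] at h
    nlinarith [norm_nonneg ((σ : E (n + 1)) + w), mul_self_nonneg ‖(w : E (n + 1))‖]
  let ψ : K → Sph (n + 1) := fun w =>
    ⟨‖(σ : E (n + 1)) + w‖⁻¹ • ((σ : E (n + 1)) + w), by
      rw [mem_sphere_zero_iff_norm, norm_smul, norm_inv, norm_norm,
        inv_mul_cancel₀ (by linarith [hnorm w])]⟩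
  have hψ : LipschitzWith 2 ψ := LipschitzWith.of_dist_le_mul fun v w => by
    rw [Subtype.dist_eq, Subtype.dist_eq]
    refine (dist_inv_norm_smul_le (hnorm v) (hnorm w)).trans ?_
    rw [dist_add_left]
    rfl
  refine ⟨{τ : Sph (n + 1) | 1 / 2 < ⟪(σ : E (n + 1)), (τ : E (n + 1))⟫}, ?_, ?_⟩
  · refine IsOpen.mem_nhds (isOpen_lt continuous_const (by fun_prop)) ?_
    simp only [Set.mem_ofPred_eq]
    rw [real_inner_self_eq_norm_sq, hσ]
    norm_num
  have hsub : {τ : Sph (n + 1) | 1 / 2 < ⟪(σ : E (n + 1)), (τ : E (n + 1))⟫}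
      ⊆ ψ '' Metric.closedBall 0 3 := by
    intro τ hτ
    simp only [Set.mem_ofPred_eq] at hτ
    set t := ⟪(σ : E (n + 1)), (τ : E (n + 1))⟫ with ht
    have ht0 : 0 < t := by linarith
    have hτn : ‖(τ : E (n + 1))‖ = 1 := by simp
    refine ⟨⟨t⁻¹ • (τ : E (n + 1)) - σ, ?_⟩, ?_, ?_⟩
    · rw [Submodule.mem_orthogonal_singleton_iff_inner_right, inner_sub_right, inner_smul_right,
        real_inner_self_eq_norm_sq, hσ, ← ht, inv_mul_cancel₀ ht0.ne']
      norm_num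
    · rw [mem_closedBall_zero_iff, Submodule.coe_norm]
      refine (norm_sub_le _ _).trans ?_
      rw [norm_smul, hσ, hτn, norm_inv, Real.norm_of_nonneg ht0.le, mul_one]
      have : t⁻¹ ≤ 2 := by rw [inv_le_comm₀ ht0 two_pos]; linarith
      linarith
    · apply Subtype.ext
      simp only [ψ, add_sub_cancel]
      rw [norm_smul, hτn, norm_inv, Real.norm_of_nonneg ht0.le, mul_one, inv_inv, smul_smul,
        mul_inv_cancel₀ ht0.ne', one_smul]
  refine (measure_mono hsub).trans_lt ?_
  have hdim : ((n + 1 : ℕ) : ℝ) - 1 = (Module.finrank ℝ K : ℝ) := by rw [hK]; simp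
  rw [sphMeasure, hdim]
  refine (hψ.hausdorffMeasure_image_le (by positivity) _).trans_lt ?_
  rw [ENNReal.rpow_natCast]
  exact ENNReal.mul_lt_top (ENNReal.pow_lt_top ENNReal.coe_lt_top)
    (isCompact_closedBall _ _).measure_lt_top

theorem exists_orthogonal_swap {d : ℕ} {x y : E d} (h : ‖x‖ = ‖y‖) :
    ∃ s : OGrp d, s.1 x = y ∧ ∀ z, ⟪x - y, z⟫ = 0 → s.1 z = z :=
  ⟨Unitary.linearIsometryEquiv.symm (Submodule.reflection (Submodule.span ℝ {x - y})ᗮ),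
    Submodule.reflection_sub h, fun _ hz => Submodule.reflection_mem_subspace_eq_self
      (Submodule.mem_orthogonal_singleton_iff_inner_right.mpr hz)⟩

/-- The point of angle `φ` on the circle through `x` and `v`. -/
def circlePt {d : ℕ} (x v : E d) (φ : ℝ) : E d := Real.cos φ • x + Real.sin φ • v

section circlePt

variable {d : ℕ} {x v : E d}

theorem inner_circlePt (hx : ‖x‖ = 1) (hv : ‖v‖ = 1) (hxv : ⟪x, v⟫ = 0) (α β : ℝ) :
    ⟪circlePt x v α, circlePt x v β⟫ = Real.cos (α - β) := by
  have hvx : ⟪v, x⟫ = 0 := by rw [real_inner_comm, hxv]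
  simp only [circlePt, inner_add_left, inner_add_right, inner_smul_left, inner_smul_right,
    real_inner_self_eq_norm_sq, hx, hv, hxv, hvx, Real.cos_sub]
  simp [mul_comm]

theorem norm_circlePt (hx : ‖x‖ = 1) (hv : ‖v‖ = 1) (hxv : ⟪x, v⟫ = 0) (α : ℝ) :
    ‖circlePt x v α‖ = 1 := by
  have h := inner_circlePt hx hv hxv α α
  rw [real_inner_self_eq_norm_sq, sub_self, Real.cos_zero] at h
  exact (pow_eq_one_iff_of_nonneg (norm_nonneg _) two_ne_zero).mp h

theorem circlePt_zero : circlePt x v 0 = x := by simp [circlePt]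

theorem circlePt_add_pi (φ : ℝ) : circlePt x v (φ + Real.pi) = -circlePt x v φ := by
  simp only [circlePt, Real.cos_add_pi, Real.sin_add_pi]
  module

theorem continuous_circlePt : Continuous (circlePt x v) := by
  unfold circlePt
  fun_prop

theorem hasDerivAt_circlePt (φ : ℝ) :
    HasDerivAt (circlePt x v) (circlePt x v (φ + Real.pi / 2)) φ := by
  unfold circlePt
  rw [Real.cos_add_pi_div_two, Real.sin_add_pi_div_two]
  exact ((Real.hasDerivAt_cos φ).smul_const x).add ((Real.hasDerivAt_sin φ).smul_const v)

theorem exists_orthogonal_circlePt (hx : ‖x‖ = 1) (hv : ‖v‖ = 1) (hxv : ⟪x, v⟫ = 0) (φ : ℝ) :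
    ∃ s : OGrp d, ∀ α, s.1 (circlePt x v α) = circlePt x v (φ - α) := by
  let n := circlePt x v (φ / 2 + Real.pi / 2)
  refine ⟨Unitary.linearIsometryEquiv.symm (Submodule.reflection (Submodule.span ℝ {n})ᗮ),
    fun α => ?_⟩
  have h : (Submodule.span ℝ {n})ᗮ.reflection (circlePt x v α)
      = -(2 • (⟪n, circlePt x v α⟫ / ‖n‖ ^ 2) • n - circlePt x v α) := by
    rw [Submodule.reflection_orthogonal_apply, Submodule.reflection_singleton_apply]
    rfl
  refine Eq.trans h ?_
  rw [norm_circlePt hx hv hxv, inner_circlePt hx hv hxv,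
    show φ / 2 + Real.pi / 2 - α = φ / 2 - α + Real.pi / 2 by ring, Real.cos_add_pi_div_two]
  simp only [n, circlePt, Real.cos_add_pi_div_two, Real.sin_add_pi_div_two]
  obtain ⟨β, rfl⟩ : ∃ β, α = φ / 2 - β := ⟨φ / 2 - α, by ring⟩
  rw [show φ / 2 - (φ / 2 - β) = β by ring, show φ - (φ / 2 - β) = φ / 2 + β by ring,
    Real.cos_sub, Real.sin_sub, Real.cos_add, Real.sin_add]
  module

end circlePt

section homogExt

variable {d : ℕ} {F : Sph d → ℝ}

theorem homogExt_coe (F : Sph d → ℝ) (σ : Sph d) : homogExt F (σ : E d) = F σ := by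
  have h1 : ‖(σ : E d)‖ = 1 := by simp
  have h0 : (σ : E d) ≠ 0 := by rw [← norm_ne_zero_iff, h1]; exact one_ne_zero
  rw [homogExt, dif_neg h0]
  congr 1
  ext1
  simp

theorem homogExt_neg (hF : ∀ σ, F (-σ) = F σ) (x : E d) : homogExt F (-x) = homogExt F x := by
  by_cases hx : x = 0
  · simp [hx]
  rw [homogExt, homogExt, dif_neg hx, dif_neg (neg_ne_zero.mpr hx), ← hF]
  congr 1
  ext1
  simp

theorem SphSmooth.hasFDerivAt (hF : SphSmooth F) {x : E d} (hx : x ≠ 0) :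
    HasFDerivAt (homogExt F) (fderiv ℝ (homogExt F) x) x :=
  ((hF.differentiableOn (by simp)).differentiableAt (isOpen_ne.mem_nhds hx)).hasFDerivAt

theorem SphSmooth.continuousOn_gradient (hF : SphSmooth F) :
    ContinuousOn (gradient (homogExt F)) {x : E d | x ≠ 0} :=
  (InnerProductSpace.toDual ℝ (E d)).symm.continuous.comp_continuousOn
    (hF.continuousOn_fderiv_of_isOpen isOpen_ne (by simp))

theorem ne_zero_of_norm_eq_one {x : E d} (hx : ‖x‖ = 1) : x ≠ 0 := by
  rw [← norm_ne_zero_iff, hx]; exact one_ne_zero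

theorem SphSmooth.continuous (hF : SphSmooth F) : Continuous F := by
  have h : Continuous fun σ : Sph d => homogExt F (σ : E d) :=
    hF.continuousOn.comp_continuous continuous_subtype_val
      fun σ => ne_zero_of_norm_eq_one (by simp)
  simpa only [homogExt_coe] using h

theorem SphSmooth.continuous_sphGrad (hF : SphSmooth F) : Continuous (sphGrad F) :=
  hF.continuousOn_gradient.comp_continuous continuous_subtype_val
    fun σ => ne_zero_of_norm_eq_one (by simp)

theorem inner_gradient (f : E d → ℝ) (x w : E d) : ⟪gradient f x, w⟫ = fderiv ℝ f x w := by
  simp [gradient]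

end homogExt

section averaging

variable {d : ℕ} {F : Sph d → ℝ} {ν : Measure (OGrp d)}

theorem ne_zero_of_unitary_apply (g : OGrp d) {x : E d} (hx : ‖x‖ = 1) : g.1 x ≠ 0 :=
  ne_zero_of_norm_eq_one (by rw [Unitary.norm_map, hx])

theorem continuous_unitary_apply {X : Type*} [TopologicalSpace X] {f : X → E d}
    {u : X → OGrp d} (hu : Continuous u) (hf : Continuous f) :
    Continuous fun p => (u p).1 (f p) :=
  (continuous_subtype_val.comp hu).clm_apply hf

theorem lintegral_sub_sq_le_lintegral_inner_sq [SFinite ν]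
    (hν : ∀ (f : OGrp d → ENNReal) (h : OGrp d), ∫⁻ g, f (g * h) ∂ν = ∫⁻ g, f g ∂ν)
    (hF : SphSmooth F) (hFeven : ∀ σ, F (-σ) = F σ) {x v : E d}
    (hx : ‖x‖ = 1) (hv : ‖v‖ = 1) (hxv : ⟪x, v⟫ = 0) (θ : ℝ) :
    ∫⁻ g, ENNReal.ofReal ((homogExt F (g.1 (circlePt x v θ)) - homogExt F (g.1 x)) ^ 2) ∂ν
      ≤ ENNReal.ofReal (Real.sin θ ^ 2) *
        ∫⁻ g, ENNReal.ofReal (⟪gradient (homogExt F) (g.1 x), g.1 v⟫ ^ 2) ∂ν := by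
  set H := homogExt F with hH
  let p := circlePt x v
  have hp : ∀ φ, ‖p φ‖ = 1 := norm_circlePt hx hv hxv
  have hpc : Continuous p := continuous_circlePt
  have h1 : ∀ φ, ∫⁻ g, ENNReal.ofReal ((H (g.1 (p φ)) - H (g.1 (p (φ - θ)))) ^ 2) ∂ν
      = ∫⁻ g, ENNReal.ofReal ((H (g.1 (p θ)) - H (g.1 x)) ^ 2) ∂ν := by
    intro φ
    obtain ⟨s, hs⟩ := exists_orthogonal_circlePt hx hv hxv φ
    rw [← hν _ s]
    refine lintegral_congr fun g => ?_
    have e1 : (g * s).1 (p φ) = g.1 x := by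
      change g.1 (s.1 (p φ)) = _
      rw [hs, sub_self, circlePt_zero]
    have e2 : (g * s).1 (p (φ - θ)) = g.1 (p θ) := by
      change g.1 (s.1 (p (φ - θ))) = _
      rw [hs, sub_sub_cancel]
    rw [e1, e2, sub_sq_comm]
  have h2 : ∀ φ, ∫⁻ g, ENNReal.ofReal
        (⟪gradient H (g.1 (p φ)), g.1 (p (φ + Real.pi / 2))⟫ ^ 2) ∂ν
      = ∫⁻ g, ENNReal.ofReal (⟪gradient H (g.1 x), g.1 v⟫ ^ 2) ∂ν := by
    intro φ
    obtain ⟨s, hs⟩ := exists_orthogonal_circlePt hx hv hxv φ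
    rw [← hν _ s]
    refine lintegral_congr fun g => ?_
    have e1 : (g * s).1 (p φ) = g.1 x := by
      change g.1 (s.1 (p φ)) = _
      rw [hs, sub_self, circlePt_zero]
    have e2 : (g * s).1 (p (φ + Real.pi / 2)) = -g.1 v := by
      change g.1 (s.1 (p (φ + Real.pi / 2))) = _
      rw [hs, sub_add_cancel_left, ← map_neg]
      simp [circlePt]
    rw [e1, e2, inner_neg_right, neg_sq]
  have hcH : ∀ {X : Type} [TopologicalSpace X] {u : X → OGrp d} {q : X → ℝ}, Continuous u →
      Continuous q → Continuous fun y => H ((u y).1 (p (q y))) := fun hu hq =>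
    hF.continuousOn.comp_continuous (continuous_unitary_apply hu (hpc.comp hq))
      fun y => ne_zero_of_unitary_apply _ (hp _)
  have hcG : ∀ {X : Type} [TopologicalSpace X] {u : X → OGrp d} {q : X → ℝ}, Continuous u →
      Continuous q → Continuous fun y => gradient H ((u y).1 (p (q y))) := fun hu hq =>
    hF.continuousOn_gradient.comp_continuous (continuous_unitary_apply hu (hpc.comp hq))
      fun y => ne_zero_of_unitary_apply _ (hp _)
  have hcI : ∀ {X : Type} [TopologicalSpace X] {u : X → OGrp d} {q : X → ℝ}, Continuous u →
      Continuous q → Continuous fun y =>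
        ⟪gradient H ((u y).1 (p (q y))), (u y).1 (p (q y + Real.pi / 2))⟫ := fun hu hq =>
    (hcG hu hq).inner (continuous_unitary_apply hu (hpc.comp (hq.add continuous_const)))
  have h3 : ∀ g : OGrp d,
      ∫⁻ φ in Set.Ioc 0 Real.pi, ENNReal.ofReal ((H (g.1 (p φ)) - H (g.1 (p (φ - θ)))) ^ 2)
      ≤ ENNReal.ofReal (Real.sin θ ^ 2) * ∫⁻ φ in Set.Ioc 0 Real.pi, ENNReal.ofReal
        (⟪gradient H (g.1 (p φ)), g.1 (p (φ + Real.pi / 2))⟫ ^ 2) := by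
    intro g
    refine setLIntegral_sub_comp_sub_sq_le (f := fun φ => H (g.1 (p φ))) ?_
      (hcI continuous_const continuous_id) ?_ θ
    · intro φ
      rw [inner_gradient]
      exact (hF.hasFDerivAt (ne_zero_of_unitary_apply g (hp φ))).comp_hasDerivAt φ
        (g.1.hasFDerivAt.comp_hasDerivAt φ (hasDerivAt_circlePt φ))
    · intro φ
      simp only [p, circlePt_add_pi, map_neg, hH, homogExt_neg hFeven]
  have h4 : ∫⁻ g, (∫⁻ φ in Set.Ioc 0 Real.pi,
        ENNReal.ofReal ((H (g.1 (p φ)) - H (g.1 (p (φ - θ)))) ^ 2)) ∂ν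
      ≤ ENNReal.ofReal (Real.sin θ ^ 2) * ∫⁻ g, (∫⁻ φ in Set.Ioc 0 Real.pi, ENNReal.ofReal
        (⟪gradient H (g.1 (p φ)), g.1 (p (φ + Real.pi / 2))⟫ ^ 2)) ∂ν := by
    rw [← lintegral_const_mul' _ _ ENNReal.ofReal_ne_top]
    exact lintegral_mono h3
  have hm1 : AEMeasurable (Function.uncurry fun g φ =>
      ENNReal.ofReal ((H (g.1 (p φ)) - H (g.1 (p (φ - θ)))) ^ 2))
      (ν.prod (volume.restrict (Set.Ioc 0 Real.pi))) :=
    ((((hcH continuous_fst continuous_snd).sub (hcH continuous_fst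
      (continuous_snd.sub continuous_const))).pow 2).measurable.ennreal_ofReal).aemeasurable
  have hm2 : AEMeasurable (Function.uncurry fun g φ => ENNReal.ofReal
      (⟪gradient H (g.1 (p φ)), g.1 (p (φ + Real.pi / 2))⟫ ^ 2))
      (ν.prod (volume.restrict (Set.Ioc 0 Real.pi))) :=
    (((hcI continuous_fst continuous_snd).pow 2).measurable.ennreal_ofReal).aemeasurable
  rw [lintegral_lintegral_swap hm1, lintegral_lintegral_swap hm2] at h4
  simp only [h1, h2, lintegral_const, Measure.restrict_apply_univ, Real.volume_Ioc, sub_zero]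
    at h4
  rw [← mul_assoc] at h4
  exact (ENNReal.mul_le_mul_iff_left (by simp [Real.pi_pos]) ENNReal.ofReal_ne_top).mp h4

theorem lintegral_inner_sq_le [SFinite ν]
    (hν : ∀ (f : OGrp d → ENNReal) (h : OGrp d), ∫⁻ g, f (g * h) ∂ν = ∫⁻ g, f g ∂ν)
    (hd : 2 ≤ d) (hF : SphSmooth F) {x v : E d}
    (hx : ‖x‖ = 1) (hv : ‖v‖ = 1) (hxv : ⟪x, v⟫ = 0) :
    ENNReal.ofReal ((d : ℝ) - 1) *
        ∫⁻ g, ENNReal.ofReal (⟪gradient (homogExt F) (g.1 x), g.1 v⟫ ^ 2) ∂ν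
      ≤ ∫⁻ g, ENNReal.ofReal (‖gradient (homogExt F) (g.1 x)‖ ^ 2) ∂ν := by
  set H := homogExt F with hH
  let K : Submodule ℝ (E d) := (Submodule.span ℝ {x})ᗮ
  have hK : Module.finrank ℝ K = d - 1 := by
    have : Fact (Module.finrank ℝ (E d) = (d - 1) + 1) := ⟨by simp; omega⟩
    exact Submodule.finrank_orthogonal_span_singleton (ne_zero_of_norm_eq_one hx)
  let w := stdOrthonormalBasis ℝ K
  have hw : Orthonormal ℝ fun i => (w i : E d) :=
    w.orthonormal.comp_linearIsometry K.subtypeₗᵢ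
  have hxw : ∀ i, ⟪x, (w i : E d)⟫ = 0 := fun i =>
    Submodule.mem_orthogonal_singleton_iff_inner_right.mp (w i).2
  have hsymm : ∀ i, ∫⁻ g, ENNReal.ofReal (⟪gradient H (g.1 x), g.1 (w i : E d)⟫ ^ 2) ∂ν
      = ∫⁻ g, ENNReal.ofReal (⟪gradient H (g.1 x), g.1 v⟫ ^ 2) ∂ν := by
    intro i
    obtain ⟨s, hs1, hs2⟩ := exists_orthogonal_swap ((hw.1 i).trans hv.symm)
    rw [← hν _ s]
    refine lintegral_congr fun g => ?_
    change ENNReal.ofReal (⟪gradient H (g.1 (s.1 x)), g.1 (s.1 (w i : E d))⟫ ^ 2) = _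
    rw [hs1, hs2 x]
    rw [inner_sub_left, real_inner_comm, hxw, real_inner_comm, hxv, sub_self]
  have hmeas : ∀ i, Measurable fun g : OGrp d =>
      ENNReal.ofReal (⟪gradient H (g.1 x), g.1 (w i : E d)⟫ ^ 2) := by
    intro i
    refine Measurable.ennreal_ofReal (Continuous.measurable (Continuous.pow ?_ 2))
    exact (hF.continuousOn_gradient.comp_continuous
      (continuous_unitary_apply continuous_id continuous_const)
      fun g => ne_zero_of_unitary_apply g hx).inner
      (continuous_unitary_apply continuous_id continuous_const)
  calc _ = ∑ i, ∫⁻ g, ENNReal.ofReal (⟪gradient H (g.1 x), g.1 (w i : E d)⟫ ^ 2) ∂ν := by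
        simp only [hsymm, Finset.sum_const, Finset.card_univ, Fintype.card_fin, hK, nsmul_eq_mul]
        rw [← Nat.cast_pred (by omega), ENNReal.ofReal_natCast]
    _ = ∫⁻ g, ∑ i, ENNReal.ofReal (⟪gradient H (g.1 x), g.1 (w i : E d)⟫ ^ 2) ∂ν :=
        (lintegral_finsetSum _ fun i _ => hmeas i).symm
    _ ≤ _ := by
        refine lintegral_mono fun g => ?_
        rw [← ENNReal.ofReal_sum_of_nonneg fun i _ => sq_nonneg _]
        refine ENNReal.ofReal_le_ofReal ?_
        have hg : Orthonormal ℝ fun i => g.1 (w i : E d) :=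
          hw.comp_linearIsometry (Unitary.linearIsometryEquiv g).toLinearIsometry
        have := hg.sum_inner_products_le (gradient H (g.1 x)) (s := Finset.univ)
        simpa only [Real.norm_eq_abs, sq_abs, real_inner_comm] using this

theorem lintegral_rotSph_sub_sq_le [SFinite ν]
    (hν : ∀ (f : OGrp d → ENNReal) (h : OGrp d), ∫⁻ g, f (g * h) ∂ν = ∫⁻ g, f g ∂ν)
    (hd : 2 ≤ d) (hF : SphSmooth F) (hFeven : ∀ σ, F (-σ) = F σ) (σ τ : Sph d) :
    ∫⁻ g, ENNReal.ofReal ((F (rotSph g τ) - F (rotSph g σ)) ^ 2) ∂ν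
      ≤ ENNReal.ofReal ((1 - ⟪(σ : E d), (τ : E d)⟫ ^ 2) / ((d : ℝ) - 1)) *
        ∫⁻ g, ENNReal.ofReal (‖sphGrad F (rotSph g σ)‖ ^ 2) ∂ν := by
  have hd' : (0 : ℝ) < d - 1 := by
    have : (2 : ℝ) ≤ d := by exact_mod_cast hd
    linarith
  have hσ : ‖(σ : E d)‖ = 1 := by simp
  have hτ : ‖(τ : E d)‖ = 1 := by simp
  set t := ⟪(σ : E d), (τ : E d)⟫ with ht
  set w : E d := τ - t • σ with hw
  have hσw : ⟪(σ : E d), w⟫ = 0 := by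
    rw [hw, inner_sub_right, inner_smul_right, real_inner_self_eq_norm_sq, hσ, ← ht]
    ring
  have hτw : (τ : E d) = t • σ + w := by rw [hw, add_sub_cancel]
  have hwn : ‖w‖ ^ 2 = 1 - t ^ 2 := by
    rw [hw, norm_sub_sq_real, inner_smul_right, real_inner_comm, ← ht, norm_smul, hσ, hτ,
      mul_one, Real.norm_eq_abs, sq_abs]
    ring
  simp only [← homogExt_coe F, coe_rotSph, sphGrad]
  by_cases hw0 : w = 0
  · rw [hw0, norm_zero] at hwn
    rw [hw0, add_zero] at hτw
    have h0 : ∀ g : OGrp d, homogExt F (g.1 (τ : E d)) = homogExt F (g.1 (σ : E d)) := by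
      intro g
      rcases sq_eq_one_iff.mp (show t ^ 2 = 1 by linarith) with h | h
      · rw [hτw, h, one_smul]
      · rw [hτw, h, neg_one_smul, map_neg, homogExt_neg hFeven]
    simp [h0]
  · have hwn0 : 0 < ‖w‖ := norm_pos_iff.mpr hw0
    have hv : ‖‖w‖⁻¹ • w‖ = 1 := by
      rw [norm_smul, norm_inv, norm_norm, inv_mul_cancel₀ hwn0.ne']
    have hσv : ⟪(σ : E d), ‖w‖⁻¹ • w⟫ = 0 := by rw [inner_smul_right, hσw, mul_zero]
    have ht1 : |t| ≤ 1 := by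
      rw [← sq_le_one_iff_abs_le_one]
      nlinarith [sq_nonneg ‖w‖]
    have hcirc : circlePt (σ : E d) (‖w‖⁻¹ • w) (Real.arccos t) = τ := by
      rw [circlePt, Real.cos_arccos (abs_le.mp ht1).1 (abs_le.mp ht1).2, Real.sin_arccos, ← hwn,
        Real.sqrt_sq hwn0.le, smul_smul, mul_inv_cancel₀ hwn0.ne', one_smul, ← hτw]
    have h1 := lintegral_sub_sq_le_lintegral_inner_sq hν hF hFeven hσ hv hσv (Real.arccos t)
    have h2 := lintegral_inner_sq_le hν hd hF hσ hv hσv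
    rw [hcirc, Real.sin_arccos, Real.sq_sqrt (by nlinarith [sq_nonneg ‖w‖])] at h1
    refine h1.trans ?_
    rw [div_eq_mul_inv, ENNReal.ofReal_mul (by nlinarith [sq_nonneg ‖w‖]), mul_assoc]
    gcongr
    rw [ENNReal.ofReal_inv_of_pos hd', ← ENNReal.div_eq_inv_mul, ENNReal.le_div_iff_mul_le
      (Or.inl (by simpa using hd')) (Or.inl ENNReal.ofReal_ne_top), mul_comm]
    exact h2

end averaging

theorem ofReal_integral_le_lintegral_ofReal {α : Type*} [MeasurableSpace α] {μ : Measure α}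
    {f : α → ℝ} (hf : ∀ x, 0 ≤ f x) :
    ENNReal.ofReal (∫ x, f x ∂μ) ≤ ∫⁻ x, ENNReal.ofReal (f x) ∂μ := by
  by_cases h : Integrable f μ
  · exact (ofReal_integral_eq_lintegral_ofReal h (Filter.Eventually.of_forall hf)).le
  · simp [integral_undef h]

theorem inner_mem_Icc {d : ℕ} (σ τ : Sph d) : ⟪(σ : E d), (τ : E d)⟫ ∈ Set.Icc (-1 : ℝ) 1 := by
  have h := abs_real_inner_le_norm (σ : E d) (τ : E d)
  simp only [norm_eq_of_mem_sphere, mul_one] at h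
  exact abs_le.mp h

theorem lintegral_kernel_eq {d : ℕ} (k : ℝ → ENNReal) (e σ : Sph d) :
    ∫⁻ τ : Sph d, k ⟪(σ : E d), (τ : E d)⟫ ∂(sphMeasure d)
      = ∫⁻ τ : Sph d, k ⟪(e : E d), (τ : E d)⟫ ∂(sphMeasure d) := by
  obtain ⟨s, hs, -⟩ := exists_orthogonal_swap (x := (e : E d)) (y := (σ : E d)) (by simp)
  rw [← lintegral_rotSph s]
  simp only [coe_rotSph, ← hs, Unitary.inner_map_map]

theorem lintegral_hardy_inequality {d : ℕ} (hd : 2 ≤ d) {k : ℝ → ENNReal} (hk : Measurable k)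
    {F : Sph d → ℝ} (hF : SphSmooth F) (hFeven : ∀ σ, F (-σ) = F σ) (e : Sph d) :
    ∫⁻ σ : Sph d, (∫⁻ τ : Sph d, ENNReal.ofReal ((F τ - F σ) ^ 2) * k ⟪(τ : E d), (σ : E d)⟫
        ∂(sphMeasure d)) ∂(sphMeasure d)
      ≤ ENNReal.ofReal (1 / ((d : ℝ) - 1)) *
        (∫⁻ τ : Sph d, ENNReal.ofReal (1 - ⟪(e : E d), (τ : E d)⟫ ^ 2) * k ⟪(e : E d), (τ : E d)⟫
          ∂(sphMeasure d)) *
        ∫⁻ σ : Sph d, ENNReal.ofReal (‖sphGrad F σ‖ ^ 2) ∂(sphMeasure d) := by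
  obtain ⟨ν, hνfin, hν0, hν⟩ := exists_rightInvariant_measure d
  have := isFiniteMeasure_sphMeasure (one_le_two.trans hd)
  have hFc := hF.continuous
  have hGc := hF.continuous_sphGrad
  have hrot : Continuous fun p : OGrp d × Sph d => rotSph p.1 p.2 :=
    (continuous_unitary_apply continuous_fst
      (continuous_subtype_val.comp continuous_snd)).subtype_mk _
  set Φ : OGrp d → Sph d → Sph d → ENNReal := fun g σ τ =>
    ENNReal.ofReal ((F (rotSph g τ) - F (rotSph g σ)) ^ 2) * k ⟪(τ : E d), (σ : E d)⟫ with hΦ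
  have hmΦ : Measurable fun p : (OGrp d × Sph d) × Sph d => Φ p.1.1 p.1.2 p.2 := by
    refine Measurable.mul ?_ (hk.comp ?_)
    · have h1 : Continuous fun p : (OGrp d × Sph d) × Sph d => rotSph p.1.1 p.2 :=
        hrot.comp (by fun_prop : Continuous fun p : (OGrp d × Sph d) × Sph d => (p.1.1, p.2))
      have h2 : Continuous fun p : (OGrp d × Sph d) × Sph d => rotSph p.1.1 p.1.2 :=
        hrot.comp continuous_fst
      exact (((hFc.comp h1).sub (hFc.comp h2)).pow 2).measurable.ennreal_ofReal
    · exact Continuous.measurable (by fun_prop)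
  have hLHS : ∀ g : OGrp d, ∫⁻ σ : Sph d, (∫⁻ τ : Sph d, Φ g σ τ ∂(sphMeasure d)) ∂(sphMeasure d)
      = ∫⁻ σ : Sph d, (∫⁻ τ : Sph d, ENNReal.ofReal ((F τ - F σ) ^ 2) *
        k ⟪(τ : E d), (σ : E d)⟫ ∂(sphMeasure d)) ∂(sphMeasure d) := by
    intro g
    refine Eq.trans (lintegral_congr fun σ => ?_) (lintegral_rotSph g _)
    refine Eq.trans (lintegral_congr fun τ => ?_) (lintegral_rotSph g _)
    simp only [hΦ, coe_rotSph, Unitary.inner_map_map]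
  have hRHS : ∀ g : OGrp d, ∫⁻ σ : Sph d, ENNReal.ofReal (‖sphGrad F (rotSph g σ)‖ ^ 2)
      ∂(sphMeasure d) = ∫⁻ σ : Sph d, ENNReal.ofReal (‖sphGrad F σ‖ ^ 2) ∂(sphMeasure d) :=
    fun g => lintegral_rotSph g fun σ => ENNReal.ofReal (‖sphGrad F σ‖ ^ 2)
  have hmN : Measurable fun p : OGrp d × Sph d =>
      ENNReal.ofReal (‖sphGrad F (rotSph p.1 p.2)‖ ^ 2) :=
    (((hGc.comp hrot).norm).pow 2).measurable.ennreal_ofReal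
  have hinner : ∀ σ : Sph d, ∫⁻ g, (∫⁻ τ : Sph d, Φ g σ τ ∂(sphMeasure d)) ∂ν
      ≤ (ENNReal.ofReal (1 / ((d : ℝ) - 1)) *
        ∫⁻ τ : Sph d, ENNReal.ofReal (1 - ⟪(e : E d), (τ : E d)⟫ ^ 2) * k ⟪(e : E d), (τ : E d)⟫
          ∂(sphMeasure d)) * ∫⁻ g, ENNReal.ofReal (‖sphGrad F (rotSph g σ)‖ ^ 2) ∂ν := by
    intro σ
    have hmk : Measurable fun τ : Sph d =>
        ENNReal.ofReal (1 - ⟪(σ : E d), (τ : E d)⟫ ^ 2) * k ⟪(σ : E d), (τ : E d)⟫ :=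
      ((Continuous.measurable (by fun_prop)).ennreal_ofReal).mul
        (hk.comp (Continuous.measurable (by fun_prop)))
    have hmσ : AEMeasurable (Function.uncurry fun (g : OGrp d) (τ : Sph d) => Φ g σ τ)
        (ν.prod (sphMeasure d)) :=
      (hmΦ.comp ((measurable_fst.prodMk measurable_const).prodMk measurable_snd)).aemeasurable
    rw [lintegral_lintegral_swap hmσ,
      ← lintegral_kernel_eq (fun c => ENNReal.ofReal (1 - c ^ 2) * k c) e σ,
      ← lintegral_const_mul _ hmk, ← lintegral_mul_const _ (hmk.const_mul _)]
    refine lintegral_mono fun τ => ?_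
    have hmg : Measurable fun g : OGrp d =>
        ENNReal.ofReal ((F (rotSph g τ) - F (rotSph g σ)) ^ 2) :=
      (((hFc.comp (hrot.comp (continuous_id.prodMk continuous_const))).sub
        (hFc.comp (hrot.comp (continuous_id.prodMk continuous_const)))).pow
        2).measurable.ennreal_ofReal
    rw [hΦ, lintegral_mul_const _ hmg]
    calc _ ≤ (ENNReal.ofReal ((1 - ⟪(σ : E d), (τ : E d)⟫ ^ 2) / ((d : ℝ) - 1)) *
          ∫⁻ g, ENNReal.ofReal (‖sphGrad F (rotSph g σ)‖ ^ 2) ∂ν) * k ⟪(τ : E d), (σ : E d)⟫ := by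
          gcongr
          exact lintegral_rotSph_sub_sq_le hν hd hF hFeven σ τ
      _ = _ := by
          have hd' : (2 : ℝ) ≤ d := by exact_mod_cast hd
          rw [real_inner_comm, div_eq_mul_one_div, mul_comm (1 - _ ^ 2) (1 / _),
            ENNReal.ofReal_mul (one_div_nonneg.mpr (by linarith))]
          ring
  have hmain : (∫⁻ σ : Sph d, (∫⁻ τ : Sph d, ENNReal.ofReal ((F τ - F σ) ^ 2) *
        k ⟪(τ : E d), (σ : E d)⟫ ∂(sphMeasure d)) ∂(sphMeasure d)) * ν Set.univ
      ≤ (ENNReal.ofReal (1 / ((d : ℝ) - 1)) *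
        (∫⁻ τ : Sph d, ENNReal.ofReal (1 - ⟪(e : E d), (τ : E d)⟫ ^ 2) * k ⟪(e : E d), (τ : E d)⟫
          ∂(sphMeasure d)) *
        ∫⁻ σ : Sph d, ENNReal.ofReal (‖sphGrad F σ‖ ^ 2) ∂(sphMeasure d)) * ν Set.univ := by
    rw [← lintegral_const, mul_assoc _ _ (ν Set.univ), ← lintegral_const]
    calc _ = ∫⁻ g, (∫⁻ σ : Sph d, (∫⁻ τ : Sph d, Φ g σ τ ∂(sphMeasure d)) ∂(sphMeasure d)) ∂ν :=
          lintegral_congr fun g => (hLHS g).symm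
      _ = ∫⁻ σ : Sph d, (∫⁻ g, (∫⁻ τ : Sph d, Φ g σ τ ∂(sphMeasure d)) ∂ν) ∂(sphMeasure d) :=
          lintegral_lintegral_swap hmΦ.lintegral_prod_right'.aemeasurable
      _ ≤ _ := lintegral_mono hinner
      _ = _ := by
          rw [lintegral_const_mul _ hmN.lintegral_prod_left',
            ← lintegral_lintegral_swap hmN.aemeasurable]
          simp only [hRHS]
  exact (ENNReal.mul_le_mul_iff_left hν0 (measure_ne_top ν _)).mp hmain

/-- Hardy-type inequality with constant
`C_P = (1/(d-1)) ∫ (1 - (e·σ')²) b(e·σ') dσ'`. -/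
theorem hardy_inequality
    (d : ℕ) (hd : 2 ≤ d) (b : ℝ → ℝ) (hb : LevyKernel d b)
    (F : Sph d → ℝ) (hF : SphSmooth F) (hFeven : ∀ σ, F (-σ) = F σ) (e : Sph d) :
    ∫ (σ : Sph d), (∫ (σ' : Sph d),
          (F σ' - F σ) ^ 2 * b ⟪(σ' : E d), (σ : E d)⟫ ∂(sphMeasure d)) ∂(sphMeasure d)
      ≤ (1 / ((d : ℝ) - 1)) *
          (∫ (σ' : Sph d),
            (1 - ⟪(e : E d), (σ' : E d)⟫ ^ 2) * b ⟪(e : E d), (σ' : E d)⟫ ∂(sphMeasure d)) *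
          ∫ (σ : Sph d), ‖sphGrad F σ‖ ^ 2 ∂(sphMeasure d) := by
  obtain ⟨hbm, hb0, hbi⟩ := hb
  have := isFiniteMeasure_sphMeasure (one_le_two.trans hd)
  have : CompactSpace (Sph d) := isCompact_iff_compactSpace.mp (isCompact_sphere _ _)
  have hd' : (2 : ℝ) ≤ d := by exact_mod_cast hd
  have hc : (0 : ℝ) ≤ 1 / ((d : ℝ) - 1) := one_div_nonneg.mpr (by linarith)
  have hsq : ∀ τ : Sph d, 0 ≤ 1 - ⟪(e : E d), (τ : E d)⟫ ^ 2 := fun τ => by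
    have h := inner_mem_Icc e τ
    nlinarith [h.1, h.2]
  have hK0 : ∀ τ : Sph d,
      0 ≤ (1 - ⟪(e : E d), (τ : E d)⟫ ^ 2) * b ⟪(e : E d), (τ : E d)⟫ := fun τ =>
    mul_nonneg (hsq τ) (hb0 _ (inner_mem_Icc e τ))
  have hA0 : ∀ σ τ : Sph d, 0 ≤ (F τ - F σ) ^ 2 * b ⟪(τ : E d), (σ : E d)⟫ := fun σ τ =>
    mul_nonneg (sq_nonneg _) (hb0 _ (inner_mem_Icc τ σ))
  have hgrad : Integrable (fun σ : Sph d => ‖sphGrad F σ‖ ^ 2) (sphMeasure d) :=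
    (hF.continuous_sphGrad.norm.pow 2).integrable_of_hasCompactSupport
      (HasCompactSupport.of_compactSpace _)
  have hG0 : 0 ≤ ∫ σ : Sph d, ‖sphGrad F σ‖ ^ 2 ∂(sphMeasure d) :=
    integral_nonneg fun σ => sq_nonneg _
  have hcK := mul_nonneg hc (integral_nonneg (μ := sphMeasure d) hK0)
  rw [← ENNReal.ofReal_le_ofReal_iff (mul_nonneg hcK hG0), ENNReal.ofReal_mul hcK,
    ENNReal.ofReal_mul hc,
    ofReal_integral_eq_lintegral_ofReal (hbi e) (Filter.Eventually.of_forall hK0),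
    ofReal_integral_eq_lintegral_ofReal hgrad (Filter.Eventually.of_forall fun σ => sq_nonneg _)]
  refine (ofReal_integral_le_lintegral_ofReal fun σ => integral_nonneg (hA0 σ)).trans ?_
  refine (lintegral_mono fun σ => ofReal_integral_le_lintegral_ofReal (hA0 σ)).trans ?_
  simp only [ENNReal.ofReal_mul (hsq _), ENNReal.ofReal_mul (sq_nonneg _)]
  exact lintegral_hardy_inequality hd hbm.ennreal_ofReal hF hFeven e
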